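/- Let d ≥ 7 be an integer and ω ∈ ℝ. Let u, v ∈ C²([0,∞)) solve the radial stationary Schrödinger–Newton–Hooke system −u″ − ((d−1)/r)u′ + r²u + v·u = ω·u and v″ + ((d−1)/r)v′ = u² for r > 0, with u′(0) = v′(0) = 0. Assume there are C, ε > 0 with |u(r)| + |u′(r)| ≤ C e^{−εr} for all r ≥ 0, that v(r) → 0 as r → ∞, and that u is not identically zero. Then ω ≥ d(d−6)/(d−2) + (8/(d−2)) · (∫₀^∞ r²u(r)² r^{d−1} dr)/(∫₀^∞ u(r)² r^{d−1} dr); in particular ω ≥ d(d−6)/(d−2). -/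

import Mathlib

open Set MeasureTheory Filter

/-- One-sided derivative on `[0,∞)`. -/
noncomputable def dI (u : ℝ → ℝ) : ℝ → ℝ := derivWithin u (Set.Ici 0)

/-- `u` is of class `C²` on `[0,∞)` (with one-sided derivatives at `0`). -/
def C2Ici (u : ℝ → ℝ) : Prop :=
  (∀ r ∈ Set.Ici (0:ℝ), DifferentiableWithinAt ℝ u (Set.Ici 0) r) ∧
  (∀ r ∈ Set.Ici (0:ℝ), DifferentiableWithinAt ℝ (dI u) (Set.Ici 0) r) ∧
  ContinuousOn (dI (dI u)) (Set.Ici 0)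

lemma hasDerivAt_dI {f : ℝ → ℝ}
    (hf : ∀ r ∈ Set.Ici (0:ℝ), DifferentiableWithinAt ℝ f (Set.Ici 0) r) {r : ℝ} (hr : 0 < r) :
    HasDerivAt f (dI f r) r :=
  (hf r hr.le).hasDerivWithinAt.hasDerivAt (Ici_mem_nhds hr)

lemma isBigO_exp_of_abs_add_abs_le {C ε : ℝ} {f g : ℝ → ℝ}
    (h : ∀ r : ℝ, 0 ≤ r → |f r| + |g r| ≤ C * Real.exp (-ε * r)) :
    (f =O[atTop] fun r => Real.exp (-ε * r)) ∧ (g =O[atTop] fun r => Real.exp (-ε * r)) := by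
  constructor <;>
  · refine Asymptotics.IsBigO.of_bound C ?_
    filter_upwards [eventually_ge_atTop 0] with r hr
    rw [Real.norm_eq_abs, Real.norm_eq_abs, Real.abs_exp]
    linarith [h r hr, abs_nonneg (f r), abs_nonneg (g r)]

lemma tendsto_pow_mul_of_isBigO_exp {ε : ℝ} (hε : 0 < ε) {f : ℝ → ℝ}
    (hf : f =O[atTop] fun r => Real.exp (-ε * r)) (k : ℕ) :
    Tendsto (fun r => r ^ k * f r) atTop (nhds 0) := by
  have h : Tendsto (fun r : ℝ => r ^ k * Real.exp (-ε * r)) atTop (nhds 0) := by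
    have h := tendsto_rpow_mul_exp_neg_mul_atTop_nhds_zero k ε hε
    simpa only [Real.rpow_natCast] using h
  exact ((Asymptotics.isBigO_refl (fun r : ℝ => r ^ k) atTop).mul hf).trans_tendsto h

/-- A polynomial weight times a product of two exponentially decaying functions tends to `0`. -/
lemma tendsto_pow_mul_mul_of_isBigO_exp {ε : ℝ} (hε : 0 < ε) {f g : ℝ → ℝ}
    (hf : f =O[atTop] fun r => Real.exp (-ε * r)) (hg : g =O[atTop] fun r => Real.exp (-ε * r))
    (k : ℕ) : Tendsto (fun r => r ^ k * (f r * g r)) atTop (nhds 0) := by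
  have h := (tendsto_pow_mul_of_isBigO_exp hε hf k).mul (tendsto_pow_mul_of_isBigO_exp hε hg 0)
  simpa [mul_assoc] using h

/-- A polynomial weight times a product of two exponentially decaying continuous functions is
integrable. -/
lemma integrableOn_pow_mul_mul_of_isBigO_exp {ε : ℝ} (hε : 0 < ε) {f g : ℝ → ℝ}
    (hfc : ContinuousOn f (Ici 0)) (hgc : ContinuousOn g (Ici 0))
    (hf : f =O[atTop] fun r => Real.exp (-ε * r)) (hg : g =O[atTop] fun r => Real.exp (-ε * r))
    (k : ℕ) : IntegrableOn (fun r => r ^ k * (f r * g r)) (Ioi 0) := by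
  refine integrable_of_isBigO_exp_neg hε
    ((continuous_pow k).continuousOn.mul (hfc.mul hgc)) ?_
  simpa [mul_assoc] using ((tendsto_pow_mul_of_isBigO_exp hε hf k).isBigO_one ℝ).mul hg

/-- The weighted integral of the square of a continuous function that is not identically zero on
`[0,∞)` is positive. -/
lemma integral_sq_mul_pow_pos {u : ℝ → ℝ} (huc : ContinuousOn u (Ici 0)) (k : ℕ)
    (hint : IntegrableOn (fun r => (u r) ^ 2 * r ^ k) (Ioi 0)) (hne : ∃ r : ℝ, 0 ≤ r ∧ u r ≠ 0) :
    0 < ∫ r in Ioi (0:ℝ), (u r) ^ 2 * r ^ k := by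
  have hnonneg : ∀ r ∈ Ioi (0:ℝ), 0 ≤ (u r) ^ 2 * r ^ k := fun r hr =>
    mul_nonneg (sq_nonneg _) (pow_nonneg (le_of_lt hr) _)
  rw [setIntegral_pos_iff_support_of_nonneg_ae
    ((ae_restrict_iff' measurableSet_Ioi).2 (ae_of_all _ hnonneg)) hint]
  have hopen : IsOpen (Ioi (0:ℝ) ∩ u ⁻¹' {0}ᶜ) :=
    (huc.mono Ioi_subset_Ici_self).isOpen_inter_preimage isOpen_Ioi isOpen_compl_singleton
  have hnonempty : (Ioi (0:ℝ) ∩ u ⁻¹' {0}ᶜ).Nonempty := by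
    by_contra hempty
    have hzero : EqOn u (fun _ => 0) (Ioi 0) := fun r hr => by
      by_contra h
      exact hempty ⟨r, hr, h⟩
    obtain ⟨r, hr, hur⟩ := hne
    exact hur (hzero.of_subset_closure huc continuousOn_const Ioi_subset_Ici_self
      (by rw [closure_Ioi]) hr)
  refine (hopen.measure_pos volume hnonempty).trans_le (measure_mono ?_)
  rintro r ⟨hr, hur⟩
  exact ⟨mul_ne_zero (pow_ne_zero _ hur) (pow_ne_zero _ (ne_of_gt hr)), hr⟩

/-- The Pohozaev functional of the system in dimension `n + 2`, combined with the boundary term of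
the spectral inequality for the harmonic oscillator. -/
noncomputable def pohozaevFun (n : ℕ) (ω : ℝ) (u v : ℝ → ℝ) (r : ℝ) : ℝ :=
  -2 * (r ^ (n + 2) * ((dI u r) ^ 2 - (r ^ 2 + v r - ω) * (u r) ^ 2))
    - r ^ (n + 2) * (dI v r) ^ 2 - n * (v r * (r ^ (n + 1) * dI v r))
    - (n + 4) * (r ^ (n + 1) * (u r * dI u r)) + (n - 4) * (r ^ (n + 2) * (u r) ^ 2)

/-- Along solutions of the system, the derivative of the Pohozaev functional does not involve the
potential. -/
lemma hasDerivAt_pohozaevFun {n : ℕ} {ω : ℝ} {u v : ℝ → ℝ} {r ddu ddv : ℝ} (hr : 0 < r)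
    (hu : HasDerivAt u (dI u r) r) (hu' : HasDerivAt (dI u) ddu r)
    (hv : HasDerivAt v (dI v r) r) (hv' : HasDerivAt (dI v) ddv r)
    (hequ : -ddu - ((n:ℝ) + 1) / r * dI u r + r ^ 2 * u r + v r * u r = ω * u r)
    (heqv : ddv + ((n:ℝ) + 1) / r * dI v r = (u r) ^ 2) :
    HasDerivAt (pohozaevFun n ω u v)
      ((n - 4) * (r ^ (n + 1) * (dI u r + r * u r) ^ 2) + 8 * (r ^ 2 * (u r) ^ 2 * r ^ (n + 1))
        + ((n + 2) * (n - 4) - n * ω) * ((u r) ^ 2 * r ^ (n + 1))) r := by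
  have hp1 := hasDerivAt_pow (n + 1) r
  have hp2 := hasDerivAt_pow (n + 2) r
  have h := ((((((hp2.mul ((hu'.pow 2).sub
    ((((hasDerivAt_pow 2 r).add hv).sub_const ω).mul (hu.pow 2)))).const_mul (-2)).sub
    (hp2.mul (hv'.pow 2))).sub ((hv.mul (hp1.mul hv')).const_mul (n:ℝ))).sub
    ((hp1.mul (hu.mul hu')).const_mul ((n:ℝ) + 4))).add
    ((hp2.mul (hu.pow 2)).const_mul ((n:ℝ) - 4)))
  have hu2 : ddu = -(((n:ℝ) + 1) / r * dI u r) + r ^ 2 * u r + v r * u r - ω * u r := by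
    linarith
  have hv2 : ddv = (u r) ^ 2 - ((n:ℝ) + 1) / r * dI v r := by linarith
  subst hu2 hv2
  refine h.congr_deriv ?_
  simp
  field_simp
  ring

/-- Improved lower bound for the frequency of bound states of the radial stationary
Schrödinger–Newton–Hooke system in supercritical dimensions `d ≥ 7`. -/
theorem stmt7 (d : ℕ) (hd : 7 ≤ d) (ω : ℝ) (u v : ℝ → ℝ)
    (hu : C2Ici u) (hv : C2Ici v)
    (hequ : ∀ r : ℝ, 0 < r →
      -dI (dI u) r - ((d:ℝ) - 1) / r * dI u r + r^2 * u r + v r * u r = ω * u r)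
    (heqv : ∀ r : ℝ, 0 < r →
      dI (dI v) r + ((d:ℝ) - 1) / r * dI v r = (u r)^2)
    (hu'0 : dI u 0 = 0) (hv'0 : dI v 0 = 0)
    (C ε : ℝ) (hC : 0 < C) (hε : 0 < ε)
    (hdecay : ∀ r : ℝ, 0 ≤ r → |u r| + |dI u r| ≤ C * Real.exp (-ε * r))
    (hvlim : Tendsto v atTop (nhds 0))
    (hne : ∃ r : ℝ, 0 ≤ r ∧ u r ≠ 0) :
    ω ≥ (d:ℝ) * ((d:ℝ) - 6) / ((d:ℝ) - 2)
        + (8 / ((d:ℝ) - 2)) *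
          ((∫ r in Ioi (0:ℝ), r^2 * (u r)^2 * r^(d-1)) /
            (∫ r in Ioi (0:ℝ), (u r)^2 * r^(d-1)))
    ∧ ω ≥ (d:ℝ) * ((d:ℝ) - 6) / ((d:ℝ) - 2) := by
  obtain ⟨n, rfl⟩ : ∃ n, d = n + 2 := ⟨d - 2, by omega⟩
  have hn5 : 5 ≤ n := by omega
  have hn : (5:ℝ) ≤ n := by exact_mod_cast hn5
  have hcast : ((n + 2 : ℕ) : ℝ) - 1 = n + 1 := by push_cast; ring
  simp only [hcast] at hequ heqv
  rw [show n + 2 - 1 = n + 1 by omega]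
  obtain ⟨hu1, hu2, -⟩ := hu
  obtain ⟨hv1, hv2, -⟩ := hv
  have huc : ContinuousOn u (Ici 0) := fun r hr => (hu1 r hr).continuousWithinAt
  have hu'c : ContinuousOn (dI u) (Ici 0) := fun r hr => (hu2 r hr).continuousWithinAt
  have hvc : ContinuousOn v (Ici 0) := fun r hr => (hv1 r hr).continuousWithinAt
  have hv'c : ContinuousOn (dI v) (Ici 0) := fun r hr => (hv2 r hr).continuousWithinAt
  obtain ⟨hub, hu'b⟩ := isBigO_exp_of_abs_add_abs_le hdecay
  -- integrability
  have iuu := integrableOn_pow_mul_mul_of_isBigO_exp hε huc huc hub hub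
  have iudu := integrableOn_pow_mul_mul_of_isBigO_exp hε huc hu'c hub hu'b
  have idudu := integrableOn_pow_mul_mul_of_isBigO_exp hε hu'c hu'c hu'b hu'b
  have hN : IntegrableOn (fun r => (u r) ^ 2 * r ^ (n + 1)) (Ioi 0) :=
    (iuu (n + 1)).congr_fun (fun r _ => by ring) measurableSet_Ioi
  have hB : IntegrableOn (fun r => r ^ 2 * (u r) ^ 2 * r ^ (n + 1)) (Ioi 0) :=
    (iuu (n + 3)).congr_fun (fun r _ => by ring) measurableSet_Ioi
  have hS : IntegrableOn (fun r => r ^ (n + 1) * (dI u r + r * u r) ^ 2) (Ioi 0) :=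
    (((idudu (n + 1)).add ((iudu (n + 2)).const_mul 2)).add (iuu (n + 3))).congr_fun
      (fun r _ => by simp only [Pi.add_apply]; ring) measurableSet_Ioi
  -- the flux of the potential converges at infinity
  have hflux : ∀ r ∈ Ioi (0:ℝ),
      HasDerivAt (fun r => r ^ (n + 1) * dI v r) ((u r) ^ 2 * r ^ (n + 1)) r := by
    intro r hr
    have hr0 : r ≠ 0 := ne_of_gt hr
    refine ((hasDerivAt_pow (n + 1) r).mul (hasDerivAt_dI hv2 hr)).congr_deriv ?_
    rw [← heqv r hr]
    simp
    field_simp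
    ring
  obtain ⟨L, hL⟩ : ∃ L, Tendsto (fun r => r ^ (n + 1) * dI v r) atTop (nhds L) :=
    ⟨_, tendsto_limUnder_of_hasDerivAt_of_integrableOn_Ioi hflux hN⟩
  -- the Pohozaev functional vanishes at infinity
  have tuu := tendsto_pow_mul_mul_of_isBigO_exp hε hub hub
  have tudu := tendsto_pow_mul_mul_of_isBigO_exp hε hub hu'b
  have tdudu := tendsto_pow_mul_mul_of_isBigO_exp hε hu'b hu'b
  have tE : Tendsto (fun r => r ^ (n + 2) * (dI v r) ^ 2) atTop (nhds 0) := by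
    have h := (hL.pow 2).mul
      (tendsto_inv_atTop_zero.comp (tendsto_pow_atTop (α := ℝ) (show n ≠ 0 by omega)))
    rw [mul_zero] at h
    refine h.congr' ?_
    filter_upwards [eventually_gt_atTop 0] with r hr
    simp only [Function.comp_apply]
    field_simp
    ring
  have tG : Tendsto (pohozaevFun n ω u v) atTop (nhds 0) := by
    have h := ((((((tdudu (n + 2)).sub (((tuu (n + 4)).add (hvlim.mul (tuu (n + 2)))).sub
      ((tuu (n + 2)).const_mul ω))).const_mul (-2)).sub tE).sub
      ((hvlim.mul hL).const_mul (n:ℝ))).sub ((tudu (n + 1)).const_mul ((n:ℝ) + 4))).add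
      ((tuu (n + 2)).const_mul ((n:ℝ) - 4))
    convert h using 1
    · funext r
      simp only [pohozaevFun]
      ring
    · simp
  have cG : ContinuousWithinAt (pohozaevFun n ω u v) (Ici 0) 0 := by
    have h1 := huc 0 self_mem_Ici
    have h2 := hu'c 0 self_mem_Ici
    have h3 := hvc 0 self_mem_Ici
    have h4 := hv'c 0 self_mem_Ici
    unfold pohozaevFun
    fun_prop
  have hG0 : pohozaevFun n ω u v 0 = 0 := by simp [pohozaevFun]
  have hSB : IntegrableOn (fun r => ((n:ℝ) - 4) * (r ^ (n + 1) * (dI u r + r * u r) ^ 2)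
      + 8 * (r ^ 2 * (u r) ^ 2 * r ^ (n + 1))) (Ioi 0) :=
    (hS.const_mul _).add (hB.const_mul _)
  have hpoh := integral_Ioi_of_hasDerivAt_of_tendsto cG
    (fun r hr => hasDerivAt_pohozaevFun hr (hasDerivAt_dI hu1 hr) (hasDerivAt_dI hu2 hr)
      (hasDerivAt_dI hv1 hr) (hasDerivAt_dI hv2 hr) (hequ r hr) (heqv r hr))
    (hSB.add (hN.const_mul (((n:ℝ) + 2) * (n - 4) - n * ω))) tG
  rw [integral_add hSB (hN.const_mul _),
    integral_add (hS.const_mul _) (hB.const_mul _), integral_const_mul, integral_const_mul,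
    integral_const_mul, hG0, sub_zero] at hpoh
  have hNpos := integral_sq_mul_pow_pos huc (n + 1) hN hne
  have hBnonneg : 0 ≤ ∫ r in Ioi (0:ℝ), r ^ 2 * (u r) ^ 2 * r ^ (n + 1) :=
    setIntegral_nonneg measurableSet_Ioi fun r hr => by
      have : 0 < r := hr
      positivity
  have hSnonneg : 0 ≤ ∫ r in Ioi (0:ℝ), r ^ (n + 1) * (dI u r + r * u r) ^ 2 :=
    setIntegral_nonneg measurableSet_Ioi fun r hr => by
      have : 0 < r := hr
      positivity
  generalize (∫ r in Ioi (0:ℝ), (u r) ^ 2 * r ^ (n + 1)) = N at *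
  generalize (∫ r in Ioi (0:ℝ), r ^ 2 * (u r) ^ 2 * r ^ (n + 1)) = B at *
  generalize (∫ r in Ioi (0:ℝ), r ^ (n + 1) * (dI u r + r * u r) ^ 2) = S at *
  have hn0 : (0:ℝ) < n := by linarith
  have hS' : 0 ≤ ((n:ℝ) - 4) * S := mul_nonneg (by linarith) hSnonneg
  have hmain : ω ≥ ((n:ℝ) + 2) * (n - 4) / n + 8 / n * (B / N) := by
    have : ((n:ℝ) + 2) * (n - 4) / n + 8 / n * (B / N)
        = (((n:ℝ) + 2) * (n - 4) * N + 8 * B) / (n * N) := by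
      field_simp
    rw [ge_iff_le, this, div_le_iff₀ (by positivity)]
    linarith
  have hd2 : ((n + 2 : ℕ) : ℝ) - 2 = n := by push_cast; ring
  have hd6 : ((n + 2 : ℕ) : ℝ) - 6 = n - 4 := by push_cast; ring
  rw [hd2, hd6, Nat.cast_add, Nat.cast_ofNat]
  refine ⟨hmain, ?_⟩
  have : 0 ≤ 8 / (n:ℝ) * (B / N) := by positivity
  linarith
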